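/- arXiv:2509.08121 — 3 statements merged into one kernel-verified Lean document; each statement's English description precedes it below -/
import Mathlib

section
/- For any block matrix with non-negative entries of the form [[B, y],[x^T, w]], where B is a d×d non-negative matrix with per(B) > 0, x, y ∈ ℝ^d, and w a scalar, the permanent satisfies per([[B, y],[x^T, w]]) = per(B)·(w + x^T B* y), where B* is the permanental inverse of B. -/
open Matrix BigOperators

/-- The permanent of a square matrix. -/
noncomputable def per {α : Type*} [DecidableEq α] [Fintype α] (A : Matrix α α ℝ) : ℝ :=
  ∑ σ : Equiv.Perm α, ∏ i, A i (σ i)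

/-- The permanental inverse. -/
noncomputable def pinv {d : ℕ} (B : Matrix (Fin (d + 1)) (Fin (d + 1)) ℝ) :
    Matrix (Fin (d + 1)) (Fin (d + 1)) ℝ :=
  Matrix.of fun i j => per (B.submatrix (Fin.succAbove j) (Fin.succAbove i)) / per B

lemma per_transpose_aux {α : Type*} [DecidableEq α] [Fintype α] (A : Matrix α α ℝ) :
    per Aᵀ = per A := by
  unfold per
  refine Fintype.sum_bijective _ (Equiv.inv (Equiv.Perm α)).bijective _ _ ?_
  intro σ
  apply Fintype.prod_equiv σ
  simp

/-- Laplace expansion along the row `e none`. -/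
lemma per_laplace_aux {α β : Type*} [DecidableEq α] [Fintype α] [DecidableEq β] [Fintype β]
    (e : Option α ≃ β) (g : β → α → β) (hg : ∀ p, Function.Injective (g p))
    (hne : ∀ p a, g p a ≠ p) (A : Matrix β β ℝ) :
    per A = ∑ p, A (e none) p * per (A.submatrix (fun a => e (some a)) (g p)) := by
  have hcard : Fintype.card (Option α) = Fintype.card β := Fintype.card_congr e
  have hb : ∀ p, Function.Bijective (fun o : Option α => o.elim p (g p)) := by
    intro p
    rw [Fintype.bijective_iff_injective_and_card]
    refine ⟨?_, hcard⟩
    rintro (_ | a) (_ | b) hab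
    · rfl
    · exact absurd hab.symm (hne p b)
    · exact absurd hab (hne p a)
    · exact congrArg some (hg p hab)
  let h : β → (Option α ≃ β) := fun p => Equiv.ofBijective _ (hb p)
  have hnone : ∀ p, h p none = p := fun p => rfl
  have hsome : ∀ p a, h p (some a) = g p a := fun p a => rfl
  let F : β × Equiv.Perm α → Equiv.Perm β :=
    fun q => (e.symm.trans (Equiv.optionCongr q.2)).trans (h q.1)
  have F0 : ∀ q, F q (e none) = q.1 := by
    intro q; simp [F, hnone]
  have F1 : ∀ q a, F q (e (some a)) = g q.1 (q.2 a) := by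
    intro q a; simp [F, hsome]
  have hF : Function.Bijective F := by
    rw [Fintype.bijective_iff_injective_and_card]
    constructor
    · rintro ⟨p, τ⟩ ⟨p', τ'⟩ hq
      have h0 : p = p' := by
        have := F0 (p, τ)
        rw [hq, F0] at this
        exact this.symm
      subst h0
      congr 1
      ext a
      have := F1 (p, τ) a
      rw [hq, F1] at this
      exact (hg p this).symm
    · rw [Fintype.card_prod, Fintype.card_perm, Fintype.card_perm, ← hcard, Fintype.card_option,
        Nat.factorial_succ]
  unfold per
  rw [← hF.sum_comp, Fintype.sum_prod_type]
  refine Finset.sum_congr rfl fun p _ => ?_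
  rw [Finset.mul_sum]
  refine Finset.sum_congr rfl fun τ _ => ?_
  rw [← e.prod_comp, Fintype.prod_option, F0]
  simp only [F1, Matrix.submatrix_apply]

theorem stmt1 {d : ℕ} (B : Matrix (Fin (d + 1)) (Fin (d + 1)) ℝ)
    (x y : Fin (d + 1) → ℝ) (w : ℝ)
    (hB : ∀ i j, 0 ≤ B i j) (hx : ∀ i, 0 ≤ x i) (hy : ∀ i, 0 ≤ y i) (hw : 0 ≤ w)
    (hper : 0 < per B) :
    per (Matrix.fromBlocks B (Matrix.of fun i (_ : Fin 1) => y i)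
        (Matrix.of fun (_ : Fin 1) j => x j) (Matrix.of fun (_ : Fin 1) (_ : Fin 1) => w)) =
      per B * (w + x ⬝ᵥ (pinv B).mulVec y) := by
  have key := per_laplace_aux
    (e := (Equiv.optionEquivSumPUnit (Fin (d + 1))).trans
      (Equiv.sumCongr (Equiv.refl _) (Equiv.ofUnique PUnit.{1} (Fin 1))))
    (g := fun p => Sum.elim (fun k => Function.update Sum.inl k (Sum.inr (0 : Fin 1)))
      (fun _ => Sum.inl) p)
    (by
      rintro (k | k) a b hab
      · simp only [Sum.elim_inl, Function.update_apply] at hab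
        split_ifs at hab <;> simp_all
      · simpa using hab)
    (by
      rintro (k | k) a hab
      · simp only [Sum.elim_inl, Function.update_apply] at hab
        split_ifs at hab <;> simp_all
      · simp at hab)
    (Matrix.fromBlocks B (Matrix.of fun i (_ : Fin 1) => y i)
        (Matrix.of fun (_ : Fin 1) j => x j) (Matrix.of fun (_ : Fin 1) (_ : Fin 1) => w))
  have hcol : ∀ k, per (B.updateCol k y) =
      ∑ j, y j * per (B.submatrix (Fin.succAbove j) (Fin.succAbove k)) := by
    intro k
    rw [← per_transpose_aux, per_laplace_aux (e := (finSuccEquiv' k).symm)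
      (g := fun p => p.succAbove) (fun p => Fin.succAbove_right_injective)
      (fun p a => Fin.succAbove_ne p a)]
    refine Finset.sum_congr rfl fun j _ => ?_
    rw [← per_transpose_aux]
    congr 1
    · simp
    · congr 1
      ext a b
      simp [Matrix.updateCol_apply, Fin.succAbove_ne]
  rw [key, Fintype.sum_sum_type]
  have h1 : ∀ k : Fin (d + 1), (Matrix.fromBlocks B (Matrix.of fun i (_ : Fin 1) => y i)
        (Matrix.of fun (_ : Fin 1) j => x j)
        (Matrix.of fun (_ : Fin 1) (_ : Fin 1) => w)).submatrix Sum.inl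
        (Function.update Sum.inl k (Sum.inr (0 : Fin 1))) = B.updateCol k y := by
    intro k
    ext i j
    by_cases hjk : j = k
    · subst hjk; simp
    · simp [hjk, Matrix.updateCol_apply]
  have h2 : (Matrix.fromBlocks B (Matrix.of fun i (_ : Fin 1) => y i)
        (Matrix.of fun (_ : Fin 1) j => x j)
        (Matrix.of fun (_ : Fin 1) (_ : Fin 1) => w)).submatrix Sum.inl Sum.inl = B := by
    ext i j; simp
  have h3 : (fun a : Fin (d + 1) => ((Equiv.optionEquivSumPUnit (Fin (d + 1))).trans
      (Equiv.sumCongr (Equiv.refl _) (Equiv.ofUnique PUnit.{1} (Fin 1)))) (some a)) = Sum.inl := by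
    ext a; simp
  rw [h3]
  simp only [Sum.elim_inl, Sum.elim_inr, h1, h2, hcol]
  simp only [Equiv.trans_apply, Equiv.optionEquivSumPUnit_none, Equiv.sumCongr_apply, Sum.map_inr,
    Matrix.fromBlocks_apply₂₁, Matrix.fromBlocks_apply₂₂, Matrix.of_apply, Finset.univ_unique,
    Finset.sum_singleton, dotProduct, Matrix.mulVec, pinv]
  rw [mul_add, add_comm, mul_comm w, Finset.mul_sum]
  congr 1
  refine Finset.sum_congr rfl fun k _ => ?_
  rw [mul_left_comm, Finset.mul_sum _ _ (per B)]
  congr 1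
  refine Finset.sum_congr rfl fun j _ => ?_
  field_simp
end

section
/- Let B ∈ ℝ^{n×n}_{≥0} be non-negative with per(B) > 0, and let B* be its permanental inverse. Then per(B*) · per(B) ≥ 1. -/
open Matrix BigOperators

/-- Rectangular permanent along a list of rows and a finset of columns. -/
noncomputable def lper {α β : Type*} [DecidableEq β] (B : α → β → ℝ) : List α → Finset β → ℝ
  | [], C => if C = ∅ then 1 else 0
  | r :: l, C => ∑ c ∈ C, B r c * lper B l (C.erase c)

theorem lper_swap {α β : Type*} [DecidableEq β] (B : α → β → ℝ) (a b : α) (l : List α)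
    (C : Finset β) : lper B (a :: b :: l) C = lper B (b :: a :: l) C := by
  simp only [lper, Finset.mul_sum]
  rw [Finset.sum_comm' (t' := C) (s' := fun c => C.erase c)]
  · refine Finset.sum_congr rfl fun c _ => Finset.sum_congr rfl fun d _ => ?_
    rw [Finset.erase_right_comm]; ring
  · intro x y; simp only [Finset.mem_erase]; tauto

theorem lper_perm {α β : Type*} [DecidableEq β] (B : α → β → ℝ) {l l' : List α}
    (h : l.Perm l') : ∀ C : Finset β, lper B l C = lper B l' C := by
  induction h with
  | nil => intro C; rfl
  | cons x _ ih => intro C; simp only [lper, ih]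
  | swap x y l => intro C; exact lper_swap B _ _ _ _
  | trans _ _ h1 h2 => intro C; rw [h1, h2]

theorem lper_map {α β α' β' : Type*} [DecidableEq β] [DecidableEq β'] (B : α → β → ℝ)
    (f : α' → α) (g : β' ↪ β) (l : List α') : ∀ C : Finset β',
    lper B (l.map f) (C.map g) = lper (fun i j => B (f i) (g j)) l C := by
  induction l with
  | nil => intro C; simp [lper]
  | cons a l ih =>
    intro C
    simp only [lper, List.map_cons, Finset.sum_map]
    refine Finset.sum_congr rfl fun c _ => ?_
    rw [← Finset.map_erase, ih]

/-- Permanent of the block with row set `R` and column set `C`. -/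
noncomputable def fper {α β : Type*} [DecidableEq β] (B : α → β → ℝ)
    (R : Finset α) (C : Finset β) : ℝ := lper B R.toList C

section
variable {α β : Type*} [DecidableEq α] [DecidableEq β] (B : α → β → ℝ)

theorem fper_empty (C : Finset β) : fper B ∅ C = if C = ∅ then 1 else 0 := by
  simp [fper, lper]

theorem fper_row {R : Finset α} {r : α} (hr : r ∈ R) (C : Finset β) :
    fper B R C = ∑ c ∈ C, B r c * fper B (R.erase r) (C.erase c) := by
  have : R.toList.Perm (r :: (R.erase r).toList) := by
    have := Finset.toList_insert (Finset.notMem_erase r R)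
    rwa [Finset.insert_erase hr] at this
  unfold fper
  rw [lper_perm B this]; rfl

theorem fper_nonneg (hB : ∀ i j, 0 ≤ B i j) (R : Finset α) : ∀ C : Finset β,
    0 ≤ fper B R C := by
  induction R using Finset.induction_on with
  | empty => intro C; rw [fper_empty]; split_ifs <;> norm_num
  | insert r R hr ih =>
    intro C
    rw [fper_row B (Finset.mem_insert_self r R)]
    rw [Finset.erase_insert hr]
    exact Finset.sum_nonneg fun c _ => mul_nonneg (hB _ _) (ih _)

theorem fper_col (R : Finset α) : ∀ {C : Finset β} {k : β}, k ∈ C →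
    fper B R C = ∑ r ∈ R, B r k * fper B (R.erase r) (C.erase k) := by
  induction R using Finset.induction_on with
  | empty =>
    intro C k hk
    rw [fper_empty, if_neg (Finset.ne_empty_of_mem hk)]; simp
  | insert a R ha ih =>
    intro C k hk
    rw [fper_row B (Finset.mem_insert_self a R), Finset.erase_insert ha, Finset.sum_insert ha,
      Finset.erase_insert ha, ← Finset.add_sum_erase _ _ hk]
    congr 1
    have h1 : ∀ c ∈ C.erase k, B a c * fper B R (C.erase c) =
        ∑ r ∈ R, B a c * (B r k * fper B (R.erase r) ((C.erase k).erase c)) := by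
      intro c hc
      have hc' := Finset.mem_erase.1 hc
      rw [ih (C := C.erase c) (k := k) (Finset.mem_erase.2 ⟨hc'.1.symm, hk⟩), Finset.mul_sum,
        Finset.erase_right_comm]
    rw [Finset.sum_congr rfl h1, Finset.sum_comm]
    refine Finset.sum_congr rfl fun r hr => ?_
    have hra : a ≠ r := fun h => ha (h ▸ hr)
    rw [fper_row B (r := a) (R := (insert a R).erase r)
      (Finset.mem_erase.2 ⟨hra, Finset.mem_insert_self _ _⟩), Finset.mul_sum]
    refine Finset.sum_congr rfl fun c _ => ?_
    rw [Finset.erase_right_comm (a := r), Finset.erase_insert ha]; ring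

/-- Pointwise exchange inequalities imply the summed version. -/
theorem exch_sum (b : β → ℝ) (hb : ∀ j, 0 ≤ b j) (R Q : Finset α) (C D : Finset β) (hD : D ⊆ C)
    (h : ∀ k ∈ D, fper B R (C.erase k) * fper B Q D ≤
      ∑ t ∈ C \ D, fper B R (C.erase t) * fper B Q ((insert t D).erase k)) :
    (∑ k ∈ C, b k * fper B R (C.erase k)) * fper B Q D ≤
      ∑ t ∈ C \ D, fper B R (C.erase t) *
        ∑ k ∈ insert t D, b k * fper B Q ((insert t D).erase k) := by
  have e : ∀ t ∈ C \ D, fper B R (C.erase t) *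
        ∑ k ∈ insert t D, b k * fper B Q ((insert t D).erase k) =
      b t * fper B R (C.erase t) * fper B Q D +
      ∑ k ∈ D, b k * (fper B R (C.erase t) * fper B Q ((insert t D).erase k)) := by
    intro t ht
    have ht' := (Finset.mem_sdiff.1 ht).2
    rw [Finset.sum_insert ht', Finset.erase_insert ht', mul_add, Finset.mul_sum]
    congr 1
    · ring
    · exact Finset.sum_congr rfl fun k _ => by ring
  rw [Finset.sum_congr rfl e, Finset.sum_add_distrib, ← Finset.sum_sdiff hD, add_mul,
    Finset.sum_mul]
  refine add_le_add le_rfl ?_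
  rw [Finset.sum_mul, Finset.sum_comm]
  refine Finset.sum_le_sum fun k hk => ?_
  rw [mul_assoc, ← Finset.mul_sum]
  exact mul_le_mul_of_nonneg_left (h k hk) (hb k)

theorem exch (hB : ∀ i j, 0 ≤ B i j) (m : ℕ) : ∀ (R Q : Finset α) (C D : Finset β),
    Q.card = m → Q ⊆ R → D ⊆ C → ∀ k ∈ D,
    fper B R (C.erase k) * fper B Q D ≤
      ∑ t ∈ C \ D, fper B R (C.erase t) * fper B Q ((insert t D).erase k) := by
  induction m with
  | zero =>
    intro R Q C D hQ _ hD k hk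
    rw [Finset.card_eq_zero.1 hQ, fper_empty B D, if_neg (Finset.ne_empty_of_mem hk), mul_zero]
    refine Finset.sum_nonneg fun t _ => mul_nonneg (fper_nonneg B hB _ _) (fper_nonneg B hB _ _)
  | succ m ih =>
    intro R Q C D hQ hQR hD k hk
    rw [fper_col B Q hk, Finset.mul_sum]
    have hsd : (C.erase k) \ (D.erase k) = C \ D := by
      ext x; simp only [Finset.mem_sdiff, Finset.mem_erase]
      constructor
      · rintro ⟨⟨h1, h2⟩, h3⟩; exact ⟨h2, fun h => h3 ⟨h1, h⟩⟩
      · rintro ⟨h1, h2⟩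
        exact ⟨⟨fun h => h2 (h ▸ hk), h1⟩, fun h => h2 h.2⟩
    have step : ∀ r ∈ Q, fper B R (C.erase k) * (B r k * fper B (Q.erase r) (D.erase k)) ≤
        ∑ t ∈ C \ D, B r k * fper B (R.erase r) ((C.erase k).erase t) *
          fper B Q ((insert t D).erase k) := by
      intro r hr
      have h1 := exch_sum B (B r) (hB r) (R.erase r) (Q.erase r) (C.erase k) (D.erase k)
        (Finset.erase_subset_erase k hD)
        (ih (R.erase r) (Q.erase r) (C.erase k) (D.erase k)
          (by rw [Finset.card_erase_of_mem hr, hQ]; rfl)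
          (Finset.erase_subset_erase r hQR) (Finset.erase_subset_erase k hD))
      rw [← fper_row B (hQR hr), hsd] at h1
      have h2 := mul_le_mul_of_nonneg_left h1 (hB r k)
      calc _ = B r k * (fper B R (C.erase k) * fper B (Q.erase r) (D.erase k)) := by ring
        _ ≤ _ := h2
        _ = _ := by
          rw [Finset.mul_sum]
          refine Finset.sum_congr rfl fun t ht => ?_
          have htk : t ≠ k := fun h => (Finset.mem_sdiff.1 ht).2 (h ▸ hk)
          rw [← fper_row B hr, Finset.erase_insert_of_ne htk]; ring
    refine (Finset.sum_le_sum step).trans ?_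
    rw [Finset.sum_comm]
    refine Finset.sum_le_sum fun t ht => ?_
    rw [← Finset.sum_mul]
    refine mul_le_mul_of_nonneg_right ?_ (fper_nonneg B hB _ _)
    have htk : k ≠ t := fun h => (Finset.mem_sdiff.1 ht).2 (h ▸ hk)
    rw [fper_col B R (C := C.erase t) (k := k) (Finset.mem_erase.2 ⟨htk, hD hk⟩),
      Finset.erase_right_comm]
    exact Finset.sum_le_sum_of_subset_of_nonneg hQR
      fun r _ _ => mul_nonneg (hB _ _) (fper_nonneg B hB _ _)

theorem main_ind (hB : ∀ i j, 0 ≤ B i j) (U : Finset α) (V : Finset β)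
    (hZ : 0 < fper B U V) (S : Finset α) : ∀ T : Finset β, S ⊆ U → T ⊆ V → S.card = T.card →
    fper B (U \ S) (V \ T) ≤
      fper (fun i j => fper B (U.erase i) (V.erase j) / fper B U V) S T * fper B U V := by
  induction S using Finset.induction_on with
  | empty =>
    intro T _ _ hc
    have : T = ∅ := Finset.card_eq_zero.1 (by simpa using hc.symm)
    subst this
    simp [fper_empty]
  | insert r S hr ih =>
    intro T hS hT hc
    have hrU : r ∈ U := hS (Finset.mem_insert_self _ _)
    rw [Finset.card_insert_of_notMem hr] at hc
    rw [fper_row _ (Finset.mem_insert_self r S), Finset.erase_insert hr, Finset.sum_mul]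
    have h1 := exch_sum B (B r) (hB r) (U.erase r) (U \ insert r S) V (V \ T)
      Finset.sdiff_subset (exch B hB _ _ _ _ _ rfl
        (by intro x hx
            simp only [Finset.mem_sdiff, Finset.mem_insert, Finset.mem_erase] at hx ⊢
            tauto) Finset.sdiff_subset)
    rw [← fper_row B hrU, Finset.sdiff_sdiff_eq_self hT] at h1
    have h2 : ∀ t ∈ T, (fper B (U.erase r) (V.erase t) *
        ∑ k ∈ insert t (V \ T), B r k * fper B (U \ insert r S) ((insert t (V \ T)).erase k))
        / fper B U V ≤ fper B (U.erase r) (V.erase t) / fper B U V *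
        fper (fun i j => fper B (U.erase i) (V.erase j) / fper B U V) S (T.erase t)
          * fper B U V := by
      intro t ht
      have hset : insert t (V \ T) = V \ T.erase t := by
        ext x; simp only [Finset.mem_insert, Finset.mem_sdiff, Finset.mem_erase]
        constructor
        · rintro (rfl | h)
          · exact ⟨hT ht, by tauto⟩
          · tauto
        · tauto
      have hrow : U \ insert r S = (U \ S).erase r := by
        ext x; simp only [Finset.mem_insert, Finset.mem_sdiff, Finset.mem_erase]; tauto
      rw [hset, hrow, ← fper_row B (Finset.mem_sdiff.2 ⟨hrU, hr⟩)]
      have h3 := ih (T.erase t) ((Finset.subset_insert r S).trans hS)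
        ((Finset.erase_subset _ _).trans hT) (by rw [Finset.card_erase_of_mem ht]; omega)
      have h4 : 0 ≤ fper B (U.erase r) (V.erase t) / fper B U V :=
        div_nonneg (fper_nonneg B hB _ _) hZ.le
      have h5 := mul_le_mul_of_nonneg_left h3 h4
      calc _ = fper B (U.erase r) (V.erase t) / fper B U V * fper B (U \ S) (V \ T.erase t) := by
            ring
        _ ≤ _ := h5
        _ = _ := by ring
    refine le_trans ?_ (Finset.sum_le_sum h2)
    rw [← Finset.sum_div, le_div_iff₀ hZ]
    linarith [h1]

end

theorem lper_ofFn {α β : Type*} [DecidableEq β] [Fintype β] (B : α → β → ℝ) (m : ℕ) :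
    ∀ (ρ : Fin m → α) (C : Finset β), C.card = m → lper B (List.ofFn ρ) C =
      ∑ f : Fin m → β, open Classical in
        if Function.Injective f ∧ ∀ x, f x ∈ C then ∏ i, B (ρ i) (f i) else 0 := by
  classical
  induction m with
  | zero =>
    intro ρ C hC
    have := Finset.card_eq_zero.1 hC
    subst this
    simp [lper, Function.injective_of_subsingleton]
  | succ m ih =>
    intro ρ C hC
    rw [List.ofFn_succ]
    simp only [lper]
    rw [← (Fin.consEquiv (fun _ => β)).sum_comp, Fintype.sum_prod_type,
      ← Finset.sum_subset (Finset.subset_univ C)]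
    · refine Finset.sum_congr rfl fun c hc => ?_
      rw [ih _ _ (by rw [Finset.card_erase_of_mem hc]; omega), Finset.mul_sum]
      refine Finset.sum_congr rfl fun g _ => ?_
      have : (Function.Injective (Fin.consEquiv (fun _ => β) (c, g)) ∧
          ∀ x, Fin.consEquiv (fun _ => β) (c, g) x ∈ C) ↔
          (Function.Injective g ∧ ∀ x, g x ∈ C.erase c) := by
        simp only [Fin.consEquiv, Equiv.coe_fn_mk, Fin.cons_injective_iff, Fin.forall_fin_succ,
          Fin.cons_zero, Fin.cons_succ, Finset.mem_erase, Set.mem_range, not_exists]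
        constructor
        · rintro ⟨⟨h1, h2⟩, h3, h4⟩; exact ⟨h2, fun x => ⟨h1 x, h4 x⟩⟩
        · rintro ⟨h1, h2⟩; exact ⟨⟨fun x => (h2 x).1, h1⟩, hc, fun x => (h2 x).2⟩
      simp only [this]
      split_ifs
      · rw [Fin.prod_univ_succ]; simp [Fin.consEquiv]
      · simp
    · intro c _ hc
      refine Finset.sum_eq_zero fun g _ => if_neg fun h => hc ?_
      simpa [Fin.consEquiv] using h.2 0

theorem per_eq_lper {n : ℕ} (A : Matrix (Fin n) (Fin n) ℝ) :
    per A = lper A (List.finRange n) Finset.univ := by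
  classical
  have h := lper_ofFn A n id Finset.univ (by simp)
  rw [List.ofFn_id] at h
  rw [h, ← Finset.sum_filter]
  unfold per
  refine Finset.sum_bij (fun σ _ => (σ : Fin n → Fin n)) ?_ ?_ ?_ ?_
  · intro σ _; simp [σ.injective]
  · intro σ _ τ _ h; exact DFunLike.coe_injective h
  · intro f hf
    have hf' : Function.Injective f := by simpa using hf
    exact ⟨Equiv.ofBijective f (Finite.injective_iff_bijective.1 hf'), Finset.mem_univ _, rfl⟩
  · intro σ _; rfl

theorem per_eq_fper {n : ℕ} (A : Matrix (Fin n) (Fin n) ℝ) :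
    per A = fper A Finset.univ Finset.univ := by
  rw [per_eq_lper]
  unfold fper
  refine lper_perm A ?_ _
  rw [List.perm_ext_iff_of_nodup (List.nodup_finRange n) (Finset.nodup_toList _)]
  simp

theorem per_sub {n : ℕ} (A : Matrix (Fin (n + 1)) (Fin (n + 1)) ℝ) (i j : Fin (n + 1)) :
    per (A.submatrix i.succAbove j.succAbove) =
      fper A (Finset.univ.erase i) (Finset.univ.erase j) := by
  rw [per_eq_lper]
  have h := lper_map A i.succAbove (Fin.succAboveEmb j) (List.finRange n) Finset.univ
  have e : Finset.univ.map (Fin.succAboveEmb j) = Finset.univ.erase j := by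
    ext x; simp [Fin.exists_succAbove_eq_iff]
  rw [e] at h
  refine Eq.trans h.symm ?_
  refine lper_perm A ?_ _
  rw [List.perm_ext_iff_of_nodup
    ((List.nodup_finRange n).map Fin.succAbove_right_injective) (Finset.nodup_toList _)]
  intro x
  simp [Fin.exists_succAbove_eq_iff]

theorem per_tr {n : ℕ} (A : Matrix (Fin n) (Fin n) ℝ) : per A = per Aᵀ := by
  have := Matrix.permanent_transpose A
  simpa [Matrix.permanent, per] using this

theorem stmt3 {n : ℕ} (B : Matrix (Fin (n + 1)) (Fin (n + 1)) ℝ)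
    (hB : ∀ i j, 0 ≤ B i j) (hper : 0 < per B) :
    1 ≤ per (pinv B) * per B := by
  have e : (pinv B)ᵀ = fun i j => fper B (Finset.univ.erase i) (Finset.univ.erase j) /
      fper B Finset.univ Finset.univ := by
    funext i j
    simp only [pinv, Matrix.transpose_apply, Matrix.of_apply]
    rw [per_sub, per_eq_fper]
  rw [per_tr, per_eq_fper (pinv B)ᵀ, e]
  rw [per_eq_fper] at hper ⊢
  have h := main_ind B hB Finset.univ Finset.univ hper Finset.univ Finset.univ
    (Finset.Subset.refl _) (Finset.Subset.refl _) rfl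
  rw [sdiff_self] at h
  refine le_trans (le_of_eq ?_) h
  exact ((fper_empty (fun i j => B i j) (∅ : Finset (Fin (n + 1)))).trans (if_pos rfl)).symm
end

section
/- Let A be an n×n matrix with a_{i,i} = 1 and 0 ≤ a_{i,j} ≤ M (M ≥ 1), and run the permanent process a^{(t+1)}_{i,j} = a^{(t)}_{i,j} + a^{(t)}_{i,t}·a^{(t)}_{t,j}/a^{(t)}_{t,t}. Then for any t ≤ min(i,j), the entries remain bounded: a^{(t)}_{i,j} ≤ n! · M^{n+1} · (M+1)^{t−1}. In particular, all intermediate entries of the permanent process are bounded by n!·M^{n+1}·(M+1)^{n−1}, so the representation size of entries remains polynomially bounded in the input size. -/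
open Matrix BigOperators

/-- The permanent process (0-indexed): `proc A 0 = A` corresponds to `A⁽¹⁾`, and the
step producing `proc A (t+1)` uses pivot index `t`. -/
noncomputable def proc {n : ℕ} (A : Matrix (Fin n) (Fin n) ℝ) : ℕ → Matrix (Fin n) (Fin n) ℝ
  | 0 => A
  | t + 1 =>
    Matrix.of fun i j =>
      if h : t < (i : ℕ) ∧ t < (j : ℕ) then
        proc A t i j +
          proc A t i ⟨t, h.2.trans j.isLt⟩ * proc A t ⟨t, h.1.trans i.isLt⟩ j /
            proc A t ⟨t, h.1.trans i.isLt⟩ ⟨t, h.1.trans i.isLt⟩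
      else proc A t i j

/-- Telescoping LU entries: `fL` lower unitriangular factor. -/
noncomputable def fL (q : ℕ → ℕ → ℕ → ℝ) (k m : ℕ) : ℝ :=
  if m < k then -q m k m / q m m m else if m = k then 1 else 0

/-- Upper triangular factor. -/
noncomputable def fU (q : ℕ → ℕ → ℕ → ℝ) (t m l : ℕ) : ℝ :=
  if m < l then q m m l else if m = l then (if m < t then -q m m m else q t t t) else 0

theorem lu_tele (q : ℕ → ℕ → ℕ → ℝ) (t : ℕ)
    (hstep : ∀ m k l, m < k → m < l → k ≤ t → l ≤ t →
      q (m + 1) k l = q m k l + q m k m * q m m l / q m m m)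
    (k l : ℕ) (hk : k ≤ t) (hl : l ≤ t) (r : ℕ) (hrk : r ≤ k) (hrl : r ≤ l) :
    ∑ m ∈ Finset.range r, fL q k m * fU q t m l = q 0 k l - q r k l := by
  induction r with
  | zero => simp
  | succ r ih =>
    rw [Finset.sum_range_succ, ih (by omega) (by omega),
      hstep r k l (by omega) (by omega) hk hl]
    have h1 : r < k := by omega
    have h2 : r < l := by omega
    simp only [fL, fU, h1, h2, if_true]
    ring

theorem lu_sum (q : ℕ → ℕ → ℕ → ℝ) (t : ℕ)
    (hstep : ∀ m k l, m < k → m < l → k ≤ t → l ≤ t →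
      q (m + 1) k l = q m k l + q m k m * q m m l / q m m m)
    (hpos : ∀ m, m < t → 1 ≤ q m m m)
    (k l : ℕ) (hk : k ≤ t) (hl : l ≤ t) :
    ∑ m ∈ Finset.range (t + 1), fL q k m * fU q t m l
      = q 0 k l - (if k = l ∧ k < t then 2 * q k k k else 0) := by
  have hsub : Finset.range (min k l + 1) ⊆ Finset.range (t + 1) := by
    intro x hx
    simp only [Finset.mem_range] at *
    omega
  rw [← Finset.sum_subset hsub, Finset.sum_range_succ,
    lu_tele q t hstep k l hk hl (min k l) (by omega) (by omega)]
  · rcases lt_trichotomy k l with h | h | h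
    · rw [min_eq_left h.le]
      have : ¬ (k = l ∧ k < t) := by omega
      simp [fL, fU, h, this]
    · subst h
      rw [min_self]
      by_cases hkt : k < t
      · simp [fL, fU, hkt]
        ring
      · have : k = t := by omega
        subst this
        simp [fL, fU]
    · rw [min_eq_right h.le]
      have h3 : ¬ (k = l ∧ k < t) := by omega
      have h4 : l < t := by omega
      have h5 := hpos l h4
      have h6 : q l l l ≠ 0 := by linarith
      simp only [fL, fU, h, h3, h4, lt_irrefl, if_true, if_false]
      field_simp
      ring
  · intro x hx hx2
    simp only [Finset.mem_range] at hx hx2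
    by_cases h : k ≤ l
    · have h1 : ¬ x < k := by omega
      have h2 : ¬ x = k := by omega
      simp [fL, h1, h2]
    · have h1 : ¬ x < l := by omega
      have h2 : ¬ x = l := by omega
      simp [fU, h1, h2]

theorem core_bound (q : ℕ → ℕ → ℕ → ℝ) (t : ℕ) (M : ℝ) (hM : 1 ≤ M)
    (hstep : ∀ m k l, m < k → m < l → k ≤ t → l ≤ t →
      q (m + 1) k l = q m k l + q m k m * q m m l / q m m m)
    (hpos : ∀ m, m < t → 1 ≤ q m m m)
    (h0 : ∀ k l, 0 ≤ q 0 k l ∧ q 0 k l ≤ M)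
    (h1 : ∀ k, k < t → q 0 k k = 1) :
    q t t t ≤ ((t + 1).factorial : ℝ) * (M * (M + 1) ^ t) := by
  let L : Matrix (Fin (t + 1)) (Fin (t + 1)) ℝ := Matrix.of fun k m => fL q k m
  let U : Matrix (Fin (t + 1)) (Fin (t + 1)) ℝ := Matrix.of fun m l => fU q t m l
  have hB : ∀ k l : Fin (t + 1), (L * U) k l
      = q 0 k l - (if (k : ℕ) = l ∧ (k : ℕ) < t then 2 * q k k k else 0) := by
    intro k l
    rw [← lu_sum q t hstep hpos k l (by omega) (by omega), Matrix.mul_apply,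
      Finset.sum_range]
    rfl
  have hL : L.det = 1 := by
    rw [Matrix.det_of_isLowerTriangular]
    · simp [L, fL]
    · intro a b hab
      have hab' : (a : ℕ) < b := by simpa using hab
      have h2 : ¬ (b : ℕ) < a := by omega
      have h3 : ¬ (b : ℕ) = a := by omega
      simp only [L, fL, Matrix.of_apply, h2, h3, if_false]
  have hU : U.det = (∏ k : Fin t, -q k k k) * q t t t := by
    rw [Matrix.det_of_isUpperTriangular]
    · rw [Fin.prod_univ_castSucc]
      simp [U, fU]
    · intro a b hab
      have hab' : (b : ℕ) < a := by simpa using hab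
      have h2 : ¬ (a : ℕ) < b := by omega
      have h3 : ¬ (a : ℕ) = b := by omega
      simp only [U, fU, Matrix.of_apply, h2, h3, if_false]
  let b : ℕ → ℝ := fun k => if k < t then (M + 1) * q k k k else M
  have hBb : ∀ k l : Fin (t + 1), |(L * U) k l| ≤ b k := by
    intro k l
    rw [hB, abs_le]
    have h2 := h0 k l
    by_cases hk : (k : ℕ) < t
    · have h3 := hpos k hk
      simp only [b, hk, if_true, and_true]
      split_ifs with hkl
      · rw [← hkl, h1 k hk]
        constructor <;> nlinarith
      · constructor <;> nlinarith
    · simp only [b, hk, if_false, and_false]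
      constructor <;> linarith
  have hdet : |(L * U).det| ≤ ((t + 1).factorial : ℝ) * ∏ k : Fin (t + 1), b k := by
    rw [Matrix.det_apply']
    refine (Finset.abs_sum_le_sum_abs _ _).trans ?_
    have : ∀ σ ∈ (Finset.univ : Finset (Equiv.Perm (Fin (t + 1)))),
        |((Equiv.Perm.sign σ : ℤ) : ℝ) * ∏ i, (L * U) (σ i) i| ≤ ∏ k : Fin (t + 1), b k := by
      intro σ _
      have hs : |((Equiv.Perm.sign σ : ℤ) : ℝ)| = 1 := by
        rcases Int.units_eq_one_or (Equiv.Perm.sign σ) with h | h <;> simp [h]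
      rw [abs_mul, hs, one_mul, Finset.abs_prod,
        ← Equiv.prod_comp σ (fun k : Fin (t + 1) => b k)]
      exact Finset.prod_le_prod (fun _ _ => abs_nonneg _) (fun i _ => hBb _ _)
    refine (Finset.sum_le_card_nsmul _ _ _ this).trans ?_
    rw [Finset.card_univ, Fintype.card_perm, Fintype.card_fin, nsmul_eq_mul]
  have hP : 0 < ∏ k : Fin t, q k k k :=
    Finset.prod_pos fun k _ => by linarith [hpos k k.2]
  have hbp : ∏ k : Fin (t + 1), b k = (M + 1) ^ t * (∏ k : Fin t, q k k k) * M := by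
    rw [Fin.prod_univ_castSucc]
    simp [b, Finset.prod_mul_distrib]
  rw [Matrix.det_mul, hL, hU, one_mul, abs_mul, Finset.abs_prod, hbp] at hdet
  have hq : ∏ k : Fin t, |-q k k k| = ∏ k : Fin t, q k k k := by
    refine Finset.prod_congr rfl fun k _ => ?_
    rw [abs_neg, abs_of_nonneg]
    linarith [hpos k k.2]
  rw [hq] at hdet
  refine (le_abs_self _).trans (le_of_mul_le_mul_left (hdet.trans (le_of_eq ?_)) hP)
  ring

theorem proc_nonneg {n : ℕ} (A : Matrix (Fin n) (Fin n) ℝ) (h : ∀ i j, 0 ≤ A i j) :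
    ∀ s i j, 0 ≤ proc A s i j := by
  intro s
  induction s with
  | zero => exact h
  | succ s ih =>
    intro i j
    simp only [proc, Matrix.of_apply]
    split_ifs
    · exact add_nonneg (ih _ _) (div_nonneg (mul_nonneg (ih _ _) (ih _ _)) (ih _ _))
    · exact ih _ _

theorem proc_diag {n : ℕ} (A : Matrix (Fin n) (Fin n) ℝ) (h : ∀ i j, 0 ≤ A i j)
    (hd : ∀ i, A i i = 1) : ∀ s i, 1 ≤ proc A s i i := by
  intro s
  have hn := proc_nonneg A h
  induction s with
  | zero => exact fun i => (hd i).ge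
  | succ s ih =>
    intro i
    simp only [proc, Matrix.of_apply]
    split_ifs
    · exact le_add_of_le_of_nonneg (ih _) (div_nonneg (mul_nonneg (hn _ _ _) (hn _ _ _)) (hn _ _ _))
    · exact ih _

/-- Numerical stability of the permanent process: intermediate entries are bounded by
`n!·M^{n+1}·(M+1)^{t−1}`.  (0-based: `proc A s = A⁽ˢ⁺¹⁾`, and the condition
`t ≤ min(i,j)` of the 1-based statement becomes `s ≤ min i j` with exponent `s`.) -/
theorem stmt18 {n : ℕ} (M : ℝ) (hM : 1 ≤ M) (A : Matrix (Fin n) (Fin n) ℝ)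
    (hdiag : ∀ i, A i i = 1) (hbd : ∀ i j, 0 ≤ A i j ∧ A i j ≤ M) :
    ∀ (s : ℕ) (i j : Fin n), s ≤ min (i : ℕ) (j : ℕ) →
      proc A s i j ≤ (n.factorial : ℝ) * M ^ (n + 1) * (M + 1) ^ s := by
  intro s i j hs
  have hsi : s ≤ (i : ℕ) := hs.trans (min_le_left _ _)
  have hsj : s ≤ (j : ℕ) := hs.trans (min_le_right _ _)
  have hin := i.isLt
  have hn0 : ∀ i j, 0 ≤ A i j := fun i j => (hbd i j).1
  let r : ℕ → Fin n := fun k => if h : k < s then ⟨k, by omega⟩ else i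
  let c : ℕ → Fin n := fun k => if h : k < s then ⟨k, by omega⟩ else j
  have hr : ∀ k (h : k < s), r k = ⟨k, by omega⟩ := fun k h => by simp [r, h]
  have hc : ∀ k (h : k < s), c k = ⟨k, by omega⟩ := fun k h => by simp [c, h]
  have hrs : r s = i := by simp [r]
  have hcs : c s = j := by simp [c]
  have hrk : ∀ k, k ≤ s → k ≤ (r k : ℕ) := by
    intro k hk
    rcases hk.lt_or_eq with h | h
    · rw [hr k h]
    · rw [h, hrs]; exact hsi
  have hck : ∀ k, k ≤ s → k ≤ (c k : ℕ) := by
    intro k hk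
    rcases hk.lt_or_eq with h | h
    · rw [hc k h]
    · rw [h, hcs]; exact hsj
  have key := core_bound (fun m k l => proc A m (r k) (c l)) s M hM
    (by
      intro m k l hmk hml hks hls
      have hms : m < s := by omega
      have h1 : m < (r k : ℕ) ∧ m < (c l : ℕ) :=
        ⟨hmk.trans_le (hrk k hks), hml.trans_le (hck l hls)⟩
      simp only [proc, Matrix.of_apply, h1, and_self, dite_true, hr m hms, hc m hms])
    (by
      intro m hm
      simp only [hr m hm, hc m hm]
      exact proc_diag A hn0 hdiag _ _)
    (fun k l => hbd _ _)
    (by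
      intro k hk
      simp only [hr k hk, hc k hk, proc]
      exact hdiag _)
  simp only [hrs, hcs] at key
  refine key.trans ?_
  have hf : ((s + 1).factorial : ℝ) ≤ (n.factorial : ℝ) := by
    exact_mod_cast Nat.factorial_le (by omega)
  have hMn : M ≤ M ^ (n + 1) := le_self_pow₀ hM (by omega)
  have hM0 : 0 ≤ M := by linarith
  rw [mul_assoc]
  gcongr
end
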